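/- Let T and T' be triangulations of the same convex n-gon given in a linear representation with triangle-pair set Γ and conflict graph H = H(T,T'), and let β ≥ 1. Then for every flip sequence F from the β-blow-up βT to βT', the number δ_F of direct pairs satisfies δ_F ≤ ac(H). -/

import Mathlib

/-!
The set `D` of direct pairs itself induces no directed cycle in the conflict graph. The reason is
that `gone` strictly increases along a conflict edge `p → q` whose ends lie on a cycle in `D`.
Since `q` is direct, an edge of its target fan is present at some time `a ≤ gone q`; this edge
crosses every edge of the source fan of `p`, so that fan has already vanished and
`gone p ≤ a ≤ gone q`. Equality is impossible: a single flip removes a single edge, while the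
source fans of `p` and `q` are disjoint (`fan_injective`), so they cannot both lose their last
edge in the same flip.

The times involved must lie within the flip sequence, because `g` is arbitrary after `ℓ`. This
is ensured by `fanT_not_mem_blowT'`: a pair with an outgoing conflict edge has no source
fan edge in `blowT'`, so `gone p ≤ ℓ`. It is nonzero since the source fan lies in `blowT`.
-/

/-!
Triangulations of a convex polygon whose vertices are labelled `0, 1, …, n-1`
in order along the boundary (this labelling is the *linear representation*:
the vertices lie on the spine in this order, and the spine edges are the
boundary edges `{i, i+1}` for `0 ≤ i ≤ n-2`).
-/

/-- Two chords of a convex polygon cross: their endpoints interleave along the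
boundary order. -/
def Crosses (e f : Finset ℕ) : Prop :=
  ∃ a b c d : ℕ, a < b ∧ c < d ∧ e = {a, b} ∧ f = {c, d} ∧
    ((a < c ∧ c < b ∧ b < d) ∨ (c < a ∧ a < d ∧ d < b))

/-- Boundary edges of the convex polygon with vertices `0, 1, …, n-1`. -/
def BoundaryEdge (n : ℕ) (e : Finset ℕ) : Prop :=
  (∃ i : ℕ, i + 2 ≤ n ∧ e = {i, i + 1}) ∨ (2 ≤ n ∧ e = ({0, n - 1} : Finset ℕ))

/-- A chord of the convex `n`-gon: a 2-element subset of the vertex set. -/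
def IsChord (n : ℕ) (e : Finset ℕ) : Prop :=
  e.card = 2 ∧ ∀ v ∈ e, v < n

/-- A triangulation of the convex `n`-gon: all boundary edges together with an
inclusion-maximal family of pairwise non-crossing diagonals. -/
def IsTriangulation (n : ℕ) (T : Set (Finset ℕ)) : Prop :=
  (∀ e ∈ T, IsChord n e) ∧
  (∀ e : Finset ℕ, BoundaryEdge n e → e ∈ T) ∧
  (∀ e ∈ T, ∀ f ∈ T, ¬ Crosses e f) ∧
  (∀ e : Finset ℕ, IsChord n e → e ∉ T → ∃ f ∈ T, Crosses e f)

/-- `T'` is obtained from the triangulation `T` of the convex `n`-gon by a single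
flip: one diagonal `e` of `T` is replaced by another diagonal `f` so that the
result is again a triangulation. -/
def Flip (n : ℕ) (T T' : Set (Finset ℕ)) : Prop :=
  IsTriangulation n T ∧ IsTriangulation n T' ∧
  ∃ e f : Finset ℕ, e ∈ T ∧ f ∉ T ∧ T' = insert f (T \ {e})

/-- A flip sequence of length `ℓ` from `T` to `T'` in the convex `n`-gon. -/
def IsFlipSeq (n : ℕ) (T T' : Set (Finset ℕ)) (ℓ : ℕ) (g : ℕ → Set (Finset ℕ)) : Prop :=
  g 0 = T ∧ g ℓ = T' ∧ ∀ i, i < ℓ → Flip n (g i) (g (i + 1))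

/-- The flip distance between two triangulations of the convex `n`-gon:
the minimal length of a flip sequence between them. -/
noncomputable def flipDist (n : ℕ) (T T' : Set (Finset ℕ)) : ℕ :=
  sInf {ℓ : ℕ | ∃ g : ℕ → Set (Finset ℕ), IsFlipSeq n T T' ℓ g}

/-- `{x, y, z}` is a triangle of the triangulation `T` (its three chords belong to
`T`; for triangulations of a convex polygon this means it is a face). -/
def IsTriangle (T : Set (Finset ℕ)) (x y z : ℕ) : Prop :=
  x ≠ y ∧ y ≠ z ∧ x ≠ z ∧
  ({x, y} : Finset ℕ) ∈ T ∧ ({y, z} : Finset ℕ) ∈ T ∧ ({x, z} : Finset ℕ) ∈ T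

/-- `p = (a, u, u')` encodes a triangle pair of `(T, T')`: the triangle
`{a, a+1, u}` of `T` and the triangle `{a, a+1, u'}` of `T'` share the spine edge
`{a, a+1}`, and each of the two triangles has exactly one edge on the spine
(the apex is not consecutive with the spine edge). -/
def IsTrianglePair (n : ℕ) (T T' : Set (Finset ℕ)) (p : ℕ × ℕ × ℕ) : Prop :=
  p.1 + 2 ≤ n ∧ p.2.1 < n ∧ p.2.2 < n ∧
  IsTriangle T p.1 (p.1 + 1) p.2.1 ∧ IsTriangle T' p.1 (p.1 + 1) p.2.2 ∧
  p.2.1 + 1 ≠ p.1 ∧ p.2.1 ≠ p.1 + 2 ∧ p.2.2 + 1 ≠ p.1 ∧ p.2.2 ≠ p.1 + 2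

/-- The set `Γ` of triangle pairs of `(T, T')`. -/
def Gamma (n : ℕ) (T T' : Set (Finset ℕ)) : Set (ℕ × ℕ × ℕ) :=
  {p | IsTrianglePair n T T' p}

/-- The left endpoints of the spine edges that carry a triangle pair. -/
def leftSet (n : ℕ) (T T' : Set (Finset ℕ)) : Set ℕ :=
  {a : ℕ | ∃ u u' : ℕ, (a, u, u') ∈ Gamma n T T'}

/-- The embedding of the original vertices into the vertex set of the β-blow-up:
`β` new subdivision vertices are inserted inside each spine edge carrying a
triangle pair. -/
noncomputable def emb (n : ℕ) (T T' : Set (Finset ℕ)) (β : ℕ) (i : ℕ) : ℕ :=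
  i + β * ({a ∈ leftSet n T T' | a < i}).ncard

/-- Number of vertices of the blown-up polygon. -/
noncomputable def blowSize (n : ℕ) (T T' : Set (Finset ℕ)) (β : ℕ) : ℕ :=
  n + β * (Gamma n T T').ncard

/-- The set `V(Δ)` of the `β` new subdivision vertices of the spine edge of the
pair `p`, in the β-blow-up. -/
noncomputable def subVerts (n : ℕ) (T T' : Set (Finset ℕ)) (β : ℕ) (p : ℕ × ℕ × ℕ) : Set ℕ :=
  {v : ℕ | ∃ k : ℕ, 1 ≤ k ∧ k ≤ β ∧ v = emb n T T' β p.1 + k}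

/-- The fan `Λ(Δ)` of the pair `p` in the β-blow-up of `T`: the `β` edges from
the apex of `Δ` to the subdivision vertices `V(Δ)`. -/
noncomputable def fanT (n : ℕ) (T T' : Set (Finset ℕ)) (β : ℕ) (p : ℕ × ℕ × ℕ) : Set (Finset ℕ) :=
  {E | ∃ k : ℕ, 1 ≤ k ∧ k ≤ β ∧
    E = ({emb n T T' β p.2.1, emb n T T' β p.1 + k} : Finset ℕ)}

/-- The fan `Λ(Δ')` of the pair `p` in the β-blow-up of `T'`. -/
noncomputable def fanT' (n : ℕ) (T T' : Set (Finset ℕ)) (β : ℕ) (p : ℕ × ℕ × ℕ) : Set (Finset ℕ) :=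
  {E | ∃ k : ℕ, 1 ≤ k ∧ k ≤ β ∧
    E = ({emb n T T' β p.2.2, emb n T T' β p.1 + k} : Finset ℕ)}

/-- The β-blow-up `βT` of `T`: images of the edges of `T` that are not subdivided,
the subdivided boundary pieces, and the fans `Λ(Δ)`. -/
noncomputable def blowT (n : ℕ) (T T' : Set (Finset ℕ)) (β : ℕ) : Set (Finset ℕ) :=
  {E | ∃ i j : ℕ, ({i, j} : Finset ℕ) ∈ T ∧
      (¬ ∃ a ∈ leftSet n T T', ({i, j} : Finset ℕ) = {a, a + 1}) ∧
      E = ({emb n T T' β i, emb n T T' β j} : Finset ℕ)} ∪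
  {E | ∃ a ∈ leftSet n T T', ∃ k : ℕ, k ≤ β ∧
      E = ({emb n T T' β a + k, emb n T T' β a + k + 1} : Finset ℕ)} ∪
  ⋃ p ∈ Gamma n T T', fanT n T T' β p

/-- The β-blow-up `βT'` of `T'`. -/
noncomputable def blowT' (n : ℕ) (T T' : Set (Finset ℕ)) (β : ℕ) : Set (Finset ℕ) :=
  {E | ∃ i j : ℕ, ({i, j} : Finset ℕ) ∈ T' ∧
      (¬ ∃ a ∈ leftSet n T T', ({i, j} : Finset ℕ) = {a, a + 1}) ∧
      E = ({emb n T T' β i, emb n T T' β j} : Finset ℕ)} ∪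
  {E | ∃ a ∈ leftSet n T T', ∃ k : ℕ, k ≤ β ∧
      E = ({emb n T T' β a + k, emb n T T' β a + k + 1} : Finset ℕ)} ∪
  ⋃ p ∈ Gamma n T T', fanT' n T T' β p

/-- Crossing of two chords `{a,b}` and `{c,d}` of a "polygon" with vertices on the
rational line (used to express crossing of fan edges, whose subdivision endpoints
are represented by midpoints of spine edges). -/
def crossQ (a b c d : ℚ) : Prop :=
  (min a b < min c d ∧ min c d < max a b ∧ max a b < max c d) ∨
  (min c d < min a b ∧ min a b < max c d ∧ max c d < max a b)

/-- The directed edge `p → q` of the conflict graph `H(T,T')`: the fan edges of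
`Λ(Δ_p)` (from the apex of `Δ_p` to the inside of its spine edge) cross the fan
edges of `Λ(Δ'_q)`. -/
def ConflictEdge (n : ℕ) (T T' : Set (Finset ℕ)) (p q : ℕ × ℕ × ℕ) : Prop :=
  p ∈ Gamma n T T' ∧ q ∈ Gamma n T T' ∧ p ≠ q ∧
  crossQ (p.2.1 : ℚ) ((p.1 : ℚ) + 1 / 2) (q.2.2 : ℚ) ((q.1 : ℚ) + 1 / 2)

/-- `S` contains a directed cycle of the directed graph with edge relation `E`. -/
def HasDicycleIn {α : Type*} (E : α → α → Prop) (S : Set α) : Prop :=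
  ∃ (k : ℕ) (f : ℕ → α), 0 < k ∧ (∀ i, i ≤ k → f i ∈ S) ∧
    (∀ i, i < k → E (f i) (f (i + 1))) ∧ f k = f 0

/-- `ac(H)`: the maximum cardinality of a subset of `Γ` inducing no directed cycle
in the conflict graph `H(T,T')`. -/
noncomputable def acNum (n : ℕ) (T T' : Set (Finset ℕ)) : ℕ :=
  sSup {m : ℕ | ∃ S : Set (ℕ × ℕ × ℕ), S ⊆ Gamma n T T' ∧
    ¬ HasDicycleIn (ConflictEdge n T T') S ∧ S.ncard = m}

/-- `gone(Δ)` for the flip sequence `g`: the least index `t` such that `g t`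
contains no edge of the fan `Λ(Δ)`. -/
noncomputable def gone (n : ℕ) (T T' : Set (Finset ℕ)) (β : ℕ)
    (g : ℕ → Set (Finset ℕ)) (p : ℕ × ℕ × ℕ) : ℕ :=
  sInf {t : ℕ | ∀ E ∈ fanT n T T' β p, E ∉ g t}

/-- The pair `p` is *direct* with respect to the flip sequence `g`: some
triangulation `g a` with `a ≤ gone(Δ)` contains an edge of `Λ(Δ')`. -/
def DirectPair (n : ℕ) (T T' : Set (Finset ℕ)) (β : ℕ)
    (g : ℕ → Set (Finset ℕ)) (p : ℕ × ℕ × ℕ) : Prop :=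
  ∃ a : ℕ, a ≤ gone n T T' β g p ∧ ∃ E ∈ fanT' n T T' β p, E ∈ g a

/-- Reachability in the graph with vertex set `V` and edge set `Ed`. -/
def GReach (V : Set ℕ) (Ed : Set (Finset ℕ)) : ℕ → ℕ → Prop :=
  Relation.ReflTransGen (fun u v => u ∈ V ∧ v ∈ V ∧ ({u, v} : Finset ℕ) ∈ Ed)

/-- An *above* pair: both apexes lie to the left of the spine edge,
`u < u' < a < a+1`. -/
def AbovePair (p : ℕ × ℕ × ℕ) : Prop := p.2.1 < p.2.2 ∧ p.2.2 < p.1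

/-- A *below* pair: both apexes lie to the right of the spine edge,
`a < a+1 < u < u'`. -/
def BelowPair (p : ℕ × ℕ × ℕ) : Prop := p.1 + 1 < p.2.1 ∧ p.2.1 < p.2.2

/-- A *crossing* pair: `u' < a < a+1 < u`. -/
def CrossingPair (p : ℕ × ℕ × ℕ) : Prop := p.2.2 < p.1 ∧ p.1 + 1 < p.2.1

/-! ### Crossings -/

/-- Sufficient condition for crossing, for chords with unordered endpoints. -/
lemma crosses_of_interleave {x y z w : ℕ}
    (h : (min x y < min z w ∧ min z w < max x y ∧ max x y < max z w) ∨
      (min z w < min x y ∧ min x y < max z w ∧ max z w < max x y)) :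
    Crosses {x, y} {z, w} := by
  have pair_minmax : ∀ a b : ℕ, ({a, b} : Finset ℕ) = {min a b, max a b} := by
    intro a b
    rcases le_total a b with h | h
    · simp [h]
    · simp [h, Finset.pair_comm]
  refine ⟨min x y, max x y, min z w, max z w, ?_, ?_, pair_minmax _ _, pair_minmax _ _, ?_⟩ <;>
    omega

/-- Integer form of the crossing of two fan chords, after doubling all coordinates. -/
lemma crossQ_half {u a v b : ℕ} (h : crossQ (u : ℚ) ((a : ℚ) + 1 / 2) (v : ℚ) ((b : ℚ) + 1 / 2)) :
    (min (2 * u) (2 * a + 1) < min (2 * v) (2 * b + 1) ∧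
      min (2 * v) (2 * b + 1) < max (2 * u) (2 * a + 1) ∧
      max (2 * u) (2 * a + 1) < max (2 * v) (2 * b + 1)) ∨
    (min (2 * v) (2 * b + 1) < min (2 * u) (2 * a + 1) ∧
      min (2 * u) (2 * a + 1) < max (2 * v) (2 * b + 1) ∧
      max (2 * v) (2 * b + 1) < max (2 * u) (2 * a + 1)) := by
  have hlt : ∀ i j : ℕ, (i : ℚ) < (j : ℚ) + 1 / 2 ↔ i ≤ j := by
    intro i j
    constructor
    · intro h
      by_contra! hc
      have : (j : ℚ) + 1 ≤ i := by exact_mod_cast hc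
      linarith
    · intro h
      have : (i : ℚ) ≤ j := by exact_mod_cast h
      linarith
  have hgt : ∀ i j : ℕ, (j : ℚ) + 1 / 2 < (i : ℚ) ↔ j < i := by
    intro i j
    constructor
    · intro h
      have : (j : ℚ) < i := by linarith
      exact_mod_cast this
    · intro h
      have : (j : ℚ) + 1 ≤ i := by exact_mod_cast h
      linarith
  unfold crossQ at h
  simp only [min_lt_iff, lt_min_iff, max_lt_iff, lt_max_iff, hlt, hgt, add_lt_add_iff_right,
    Nat.cast_lt] at h
  omega

/-- In a non-crossing family, the fan chords of two triangles that each have exactly one edge on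
the spine do not cross: otherwise some sides of the two triangles would cross. The apex
conditions exclude the case where both triples are the same triangle with two spine edges. -/
lemma not_crossQ_of_isTriangle {T : Set (Finset ℕ)} (hT : ∀ e ∈ T, ∀ f ∈ T, ¬ Crosses e f)
    {a u b v : ℕ} (h1 : IsTriangle T a (a + 1) u) (h2 : IsTriangle T b (b + 1) v)
    (hu : u + 1 ≠ a ∧ u ≠ a + 2) :
    ¬ crossQ (u : ℚ) ((a : ℚ) + 1 / 2) (v : ℚ) ((b : ℚ) + 1 / 2) := by
  intro h
  have h := crossQ_half h
  obtain ⟨-, n1, n2, -, e1, e2⟩ := h1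
  obtain ⟨-, m1, m2, -, f1, f2⟩ := h2
  have e1' := Finset.pair_comm (a + 1) u ▸ e1
  have e2' := Finset.pair_comm a u ▸ e2
  have f1' := Finset.pair_comm (b + 1) v ▸ f1
  have f2' := Finset.pair_comm b v ▸ f2
  have hN : ∀ {x y z w : ℕ}, ({x, y} : Finset ℕ) ∈ T → ({z, w} : Finset ℕ) ∈ T →
      x < z → z < y → ¬ y < w := fun {x y z w} h1 h2 hxz hzy hyw =>
    hT _ h1 _ h2 ⟨x, y, z, w, hxz.trans hzy, hzy.trans hyw, rfl, rfl, Or.inl ⟨hxz, hzy, hyw⟩⟩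
  clear hT
  have hu' : u < a ∨ a + 1 < u := by omega
  have hv' : v < b ∨ b + 1 < v := by omega
  rcases hu' with hu' | hu' <;> rcases hv' with hv' | hv' <;> rcases h with h | h
  · exact hN e1' f1' (by omega) (by omega) (by omega)
  · exact hN f1' e1' (by omega) (by omega) (by omega)
  · by_cases hva : v = a + 1
    · by_cases hub : u = b
      · exact hN e2' f1 (by omega) (by omega) (by omega)
      · exact hN e2' f2 (by omega) (by omega) (by omega)
    · exact hN e1' f1 (by omega) (by omega) (by omega)
  · exact hN f2 e1' (by omega) (by omega) (by omega)
  · exact hN e2 f1' (by omega) (by omega) (by omega)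
  · by_cases hub : u = b + 1
    · by_cases hva : v = a
      · exact hN f2' e1 (by omega) (by omega) (by omega)
      · exact hN f2' e2 (by omega) (by omega) (by omega)
    · exact hN f1' e1 (by omega) (by omega) (by omega)
  · exact hN e2 f2 (by omega) (by omega) (by omega)
  · exact hN f2 e2 (by omega) (by omega) (by omega)

/-! ### The embedding into the blow-up -/

section Blow

variable {n : ℕ} {T T' : Set (Finset ℕ)} {β : ℕ}

lemma Gamma_finite : (Gamma n T T').Finite := by
  refine ((Set.finite_Iio n).prod ((Set.finite_Iio n).prod (Set.finite_Iio n))).subset ?_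
  rintro ⟨a, u, u'⟩ ⟨h1, h2, h3, -⟩
  simp only [Set.mem_prod, Set.mem_Iio]
  exact ⟨by simp only at h1; omega, h2, h3⟩

lemma leftSet_lt_finite (i : ℕ) : {a ∈ leftSet n T T' | a < i}.Finite :=
  (Set.finite_Iio i).subset fun _ h => h.2

lemma emb_strictMono : StrictMono (emb n T T' β) := by
  intro i j hij
  have : ({a ∈ leftSet n T T' | a < i}).ncard ≤ ({a ∈ leftSet n T T' | a < j}).ncard :=
    Set.ncard_le_ncard (fun a h => ⟨h.1, h.2.trans hij⟩) (leftSet_lt_finite j)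
  have := Nat.mul_le_mul_left β this
  unfold emb
  omega

lemma emb_succ {a : ℕ} (ha : a ∈ leftSet n T T') :
    emb n T T' β (a + 1) = emb n T T' β a + β + 1 := by
  have h : {x ∈ leftSet n T T' | x < a + 1} = insert a {x ∈ leftSet n T T' | x < a} := by
    ext x
    simp only [Set.mem_ofPred_eq, Set.mem_insert_iff]
    constructor
    · rintro ⟨h1, h2⟩
      rcases Nat.lt_succ_iff_lt_or_eq.mp h2 with h | h
      · exact Or.inr ⟨h1, h⟩
      · exact Or.inl h
    · rintro (rfl | ⟨h1, h2⟩)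
      · exact ⟨ha, by omega⟩
      · exact ⟨h1, by omega⟩
  unfold emb
  rw [h, Set.ncard_insert_of_notMem (by simp) (leftSet_lt_finite a)]
  ring

lemma emb_lt_sub {i a k : ℕ} (h : i ≤ a) (hk : 1 ≤ k) :
    emb n T T' β i < emb n T T' β a + k := by
  have := (emb_strictMono (n := n) (T := T) (T' := T') (β := β)).monotone h
  omega

lemma sub_lt_emb {i a k : ℕ} (ha : a ∈ leftSet n T T') (h : a < i) (hk : k ≤ β) :
    emb n T T' β a + k < emb n T T' β i := by
  have := (emb_strictMono (n := n) (T := T) (T' := T') (β := β)).monotone (Nat.succ_le_of_lt h)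
  have := emb_succ (β := β) ha
  simp only [Nat.succ_eq_add_one] at *
  omega

lemma sub_ne_emb {i a k : ℕ} (ha : a ∈ leftSet n T T') (hk : 1 ≤ k) (hk' : k ≤ β) :
    emb n T T' β a + k ≠ emb n T T' β i := by
  rcases le_or_gt i a with h | h
  · exact (emb_lt_sub h hk).ne'
  · exact (sub_lt_emb ha h hk').ne

lemma subdiv_lt_subdiv {a b j k : ℕ} (ha : a ∈ leftSet n T T') (h : a < b) (hk : k ≤ β) :
    emb n T T' β a + k < emb n T T' β b + j :=
  (sub_lt_emb ha h hk).trans_le (Nat.le_add_right _ _)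

lemma sub_injective {a b j k : ℕ} (ha : a ∈ leftSet n T T') (hb : b ∈ leftSet n T T')
    (hj : j ≤ β) (hk : k ≤ β) (h : emb n T T' β a + k = emb n T T' β b + j) : a = b := by
  rcases lt_trichotomy a b with hab | hab | hab
  · exact absurd h (subdiv_lt_subdiv ha hab hk).ne
  · exact hab
  · exact absurd h (subdiv_lt_subdiv hb hab hj).ne'

lemma mem_leftSet {p : ℕ × ℕ × ℕ} (hp : p ∈ Gamma n T T') : p.1 ∈ leftSet n T T' :=
  ⟨p.2.1, p.2.2, hp⟩

lemma pair_eq {x y z w : ℕ} (h : ({x, y} : Finset ℕ) = {z, w}) :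
    (x = z ∧ y = w) ∨ (x = w ∧ y = z) := by
  have hset : ({x, y} : Set ℕ) = {z, w} := by
    have := congrArg (fun s : Finset ℕ => (s : Set ℕ)) h
    simpa using this
  exact Set.pair_eq_pair_iff.mp hset

/-! ### Fans -/

/-- A fan edge determines its spine edge and its apex. -/
lemma fan_injective {a b u v j k : ℕ} (ha : a ∈ leftSet n T T') (hb : b ∈ leftSet n T T')
    (hk : 1 ≤ k) (hk' : k ≤ β) (hj' : j ≤ β)
    (h : ({emb n T T' β u, emb n T T' β a + k} : Finset ℕ) =
      {emb n T T' β v, emb n T T' β b + j}) : a = b ∧ u = v := by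
  rcases pair_eq h with ⟨h1, h2⟩ | ⟨h1, h2⟩
  · exact ⟨sub_injective ha hb hj' hk' h2, emb_strictMono.injective h1⟩
  · exact (sub_ne_emb ha hk hk' h2).elim

/-- A conflict edge makes the actual fans in the blow-up cross: the blow-up labelling preserves
the order of original vertices and of midpoints of subdivided spine edges. -/
lemma fan_crosses {p q : ℕ × ℕ × ℕ} (h : ConflictEdge n T T' p q) {E F : Finset ℕ}
    (hE : E ∈ fanT n T T' β p) (hF : F ∈ fanT' n T T' β q) : Crosses E F := by
  obtain ⟨hp, hq, -, hc⟩ := h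
  obtain ⟨k, hk, hk', rfl⟩ := hE
  obtain ⟨j, hj, hj', rfl⟩ := hF
  have ha := mem_leftSet hp
  have hb := mem_leftSet hq
  obtain ⟨a, u, u'⟩ := p
  obtain ⟨b, v', v⟩ := q
  simp only at hc ha hb ⊢
  have hc := crossQ_half hc
  apply crosses_of_interleave
  have x1 : u ≤ a → _ := fun h => emb_lt_sub (n := n) (T := T) (T' := T') (β := β) h hk
  have x2 : a < u → _ := fun h => sub_lt_emb ha h hk'
  have x3 : v ≤ b → _ := fun h => emb_lt_sub (n := n) (T := T) (T' := T') (β := β) h hj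
  have x4 : b < v → _ := fun h => sub_lt_emb hb h hj'
  have x5 : u ≤ b → _ := fun h => emb_lt_sub (n := n) (T := T) (T' := T') (β := β) h hj
  have x6 : b < u → _ := fun h => sub_lt_emb hb h hj'
  have x7 : v ≤ a → _ := fun h => emb_lt_sub (n := n) (T := T) (T' := T') (β := β) h hk
  have x8 : a < v → _ := fun h => sub_lt_emb ha h hk'
  have x9 : a < b → _ := fun h => subdiv_lt_subdiv (j := j) ha h hk'
  have x10 : b < a → _ := fun h => subdiv_lt_subdiv (j := k) hb h hj'
  have x11 : u < v → _ := fun h => emb_strictMono (n := n) (T := T) (T' := T') (β := β) h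
  have x12 : v < u → _ := fun h => emb_strictMono (n := n) (T := T) (T' := T') (β := β) h
  omega

/-- A source fan edge of `p` lying in `blowT'` can only be a target fan edge, so the source
triangle of `p` is a triangle of `T'`; this forbids outgoing conflict edges. -/
lemma fanT_not_mem_blowT' (hT' : IsTriangulation n T') {p q : ℕ × ℕ × ℕ}
    (h : ConflictEdge n T T' p q) {E : Finset ℕ} (hE : E ∈ fanT n T T' β p) :
    E ∉ blowT' n T T' β := by
  obtain ⟨hp, hq, -, hc⟩ := h
  obtain ⟨k, hk, hk', rfl⟩ := hE
  have ha := mem_leftSet hp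
  obtain ⟨-, -, -, ⟨-, hne1, hne2, -⟩, -⟩ := id hp
  rintro ((⟨i, j, -, -, hij⟩ | ⟨b, hb, j, hj, hbj⟩) | hfan)
  · rcases pair_eq hij with ⟨-, h2⟩ | ⟨-, h2⟩ <;> exact sub_ne_emb ha hk hk' h2
  · rcases pair_eq hbj with ⟨h1, h2⟩ | ⟨h1, h2⟩
    · have hj0 : j = 0 := by
        by_contra h0
        exact sub_ne_emb hb (by omega) hj h1.symm
      subst hj0
      have hub := emb_strictMono.injective h1
      have hab := sub_injective ha hb (j := 1) (by omega) hk' (by omega)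
      omega
    · have hjβ : j = β := by
        by_contra h0
        exact sub_ne_emb hb (k := j + 1) (by omega) (by omega) h1.symm
      subst hjβ
      rw [← emb_succ hb] at h1
      have hub := emb_strictMono.injective h1
      have hab := sub_injective ha hb hj hk' h2
      omega
  · simp only [Set.mem_iUnion] at hfan
    obtain ⟨r, hr, j, hj, hj', hrj⟩ := hfan
    obtain ⟨hab, huv⟩ := fan_injective ha (mem_leftSet hr) hk hk' hj' hrj
    obtain ⟨-, -, -, -, htr, -, -, hr1, hr2⟩ := hr
    obtain ⟨-, -, -, -, htq, -⟩ := hq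
    rw [← hab, ← huv] at htr hr1 hr2
    exact not_crossQ_of_isTriangle hT'.2.2.1 htr htq ⟨hr1, hr2⟩ hc

/-! ### Monotonicity of `gone` -/

variable {ℓ : ℕ} {g : ℕ → Set (Finset ℕ)}

lemma gone_spec (hT' : IsTriangulation n T') (hβ : 1 ≤ β)
    (hF : IsFlipSeq (blowSize n T T' β) (blowT n T T' β) (blowT' n T T' β) ℓ g)
    {p q : ℕ × ℕ × ℕ} (h : ConflictEdge n T T' p q) :
    0 < gone n T T' β g p ∧ gone n T T' β g p ≤ ℓ ∧
      ∀ E ∈ fanT n T T' β p, E ∉ g (gone n T T' β g p) := by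
  have hmem : ℓ ∈ {t : ℕ | ∀ E ∈ fanT n T T' β p, E ∉ g t} := by
    intro E hE
    rw [hF.2.1]
    exact fanT_not_mem_blowT' hT' h hE
  have hs : gone n T T' β g p ∈ {t : ℕ | ∀ E ∈ fanT n T T' β p, E ∉ g t} := Nat.sInf_mem ⟨ℓ, hmem⟩
  refine ⟨?_, Nat.sInf_le hmem, hs⟩
  rw [Nat.pos_iff_ne_zero]
  intro h0
  rw [h0] at hs
  have hE : ({emb n T T' β p.2.1, emb n T T' β p.1 + 1} : Finset ℕ) ∈ fanT n T T' β p :=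
    ⟨1, le_rfl, hβ, rfl⟩
  refine hs _ hE ?_
  rw [hF.1]
  refine Or.inr ?_
  simp only [Set.mem_iUnion]
  exact ⟨p, h.1, hE⟩

lemma exists_mem_before_gone {p : ℕ × ℕ × ℕ} (h : 0 < gone n T T' β g p) :
    ∃ E ∈ fanT n T T' β p, E ∈ g (gone n T T' β g p - 1) := by
  have : gone n T T' β g p - 1 ∉ {t : ℕ | ∀ E ∈ fanT n T T' β p, E ∉ g t} :=
    Nat.notMem_of_lt_sInf (by unfold gone at h ⊢; omega)
  simpa using this

/-- The source fan of `p` disappears strictly before that of a direct pair `q` in conflict with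
it; the outgoing conflict edge at `q` guarantees `gone q ≤ ℓ`. -/
lemma gone_lt_gone (hT' : IsTriangulation n T') (hβ : 1 ≤ β)
    (hF : IsFlipSeq (blowSize n T T' β) (blowT n T T' β) (blowT' n T T' β) ℓ g)
    {p q r : ℕ × ℕ × ℕ} (hpq : ConflictEdge n T T' p q) (hqr : ConflictEdge n T T' q r)
    (hq : DirectPair n T T' β g q) : gone n T T' β g p < gone n T T' β g q := by
  obtain ⟨hp0, hpl, hpg⟩ := gone_spec hT' hβ hF hpq
  obtain ⟨hq0, hql, hqg⟩ := gone_spec hT' hβ hF hqr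
  obtain ⟨a, ha, F, hFq, hFa⟩ := hq
  have htri : IsTriangulation (blowSize n T T' β) (g a) := by
    rcases (ha.trans hql).lt_or_eq with h | h
    · exact (hF.2.2 a h).1
    · have := (hF.2.2 (a - 1) (by omega)).2.1
      rwa [Nat.sub_add_cancel (by omega)] at this
  have hpa : gone n T T' β g p ≤ a :=
    Nat.sInf_le fun E hE hEa => htri.2.2.1 E hEa F hFa (fan_crosses hpq hE hFq)
  refine lt_of_le_of_ne (hpa.trans ha) fun heq => ?_
  -- Both fans would lose their last edge in the same flip, which removes only one edge.
  obtain ⟨E, hE, hEg⟩ := exists_mem_before_gone hp0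
  obtain ⟨E', hE', hEg'⟩ := exists_mem_before_gone hq0
  have hE1 := hpg E hE
  have hE1' := hqg E' hE'
  rw [← heq] at hEg' hE1'
  obtain ⟨-, -, e, f, -, -, hef⟩ := hF.2.2 (gone n T T' β g p - 1) (by omega)
  rw [Nat.sub_add_cancel hp0] at hef
  have key : ∀ X, X ∈ g (gone n T T' β g p - 1) → X ∉ g (gone n T T' β g p) → X = e := by
    intro X hX hX'
    by_contra hne
    exact hX' (hef ▸ Or.inr ⟨hX, hne⟩)
  obtain ⟨k, hk, hk', rfl⟩ := hE
  obtain ⟨j, hj, hj', rfl⟩ := hE'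
  have hab := (fan_injective (mem_leftSet hpq.1) (mem_leftSet hpq.2.1) hk hk' hj'
    ((key _ hEg hE1).trans (key _ hEg' hE1').symm)).1
  -- Fan chords starting at the same midpoint do not cross.
  have hc := crossQ_half hpq.2.2.2
  omega

end Blow

/-- For every flip sequence `F` from `βT` to `βT'`, the number of
direct pairs is at most `ac(H)`. -/
theorem direct_pairs_le_acyclic
    (n : ℕ) (hn : 3 ≤ n) (T T' : Set (Finset ℕ))
    (hT : IsTriangulation n T) (hT' : IsTriangulation n T')
    (β : ℕ) (hβ : 1 ≤ β) (ℓ : ℕ) (g : ℕ → Set (Finset ℕ))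
    (hF : IsFlipSeq (blowSize n T T' β) (blowT n T T' β) (blowT' n T T' β) ℓ g) :
    ({p ∈ Gamma n T T' | DirectPair n T T' β g p}).ncard ≤ acNum n T T' := by
  have hfin := Gamma_finite (n := n) (T := T) (T' := T')
  refine le_csSup ?_ ⟨{p ∈ Gamma n T T' | DirectPair n T T' β g p}, fun _ h => h.1, ?_, rfl⟩
  · refine ⟨(Gamma n T T').ncard, ?_⟩
    rintro m ⟨S, hS, -, rfl⟩
    exact Set.ncard_le_ncard hS hfin
  · rintro ⟨k, f, hk, hS, hE, hcyc⟩
    have hout : ∀ i, i ≤ k → ∃ r, ConflictEdge n T T' (f i) r := by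
      intro i hi
      rcases hi.lt_or_eq with h | rfl
      · exact ⟨_, hE i h⟩
      · exact ⟨_, hcyc ▸ hE 0 hk⟩
    have hstep : ∀ i, i < k → gone n T T' β g (f i) < gone n T T' β g (f (i + 1)) := by
      intro i hi
      obtain ⟨r, hr⟩ := hout (i + 1) hi
      exact gone_lt_gone hT' hβ hF (hE i hi) hr (hS (i + 1) hi).2
    have hmono : ∀ i, i ≤ k → gone n T T' β g (f 0) + i ≤ gone n T T' β g (f i) := by
      intro i
      induction i with
      | zero => intro _; simp
      | succ i ih =>
        intro hi
        have := ih (by omega)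
        have := hstep i hi
        omega
    have := hmono k le_rfl
    rw [hcyc] at this
    omega
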